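/- Let X be uniformly distributed on [−π, π]. Fix l ∈ ℕ and let m_D = span{φ_j : j = 0, …, 2l} be the space of trigonometric polynomials of degree at most l, of linear dimension D = 2l+1. If m_D satisfies the small-ball condition with constants (β₀, κ₀), then β₀ ≤ 3^{1/4} √2 · κ₀^{−1/2} D^{−3/4}. -/

import Mathlib

open MeasureTheory

/-- The uniform probability distribution on `[-π, π]`. -/
noncomputable def unifSym : Measure ℝ :=
  (ENNReal.ofReal (2 * Real.pi))⁻¹ • (volume.restrict (Set.Icc (-Real.pi) Real.pi))

/-- The trigonometric system `φ₀ ≡ 1`, `φ_{2k}(x) = √2 cos(kx)`,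
`φ_{2k+1}(x) = √2 sin(kx)` for `k ≥ 1`. -/
noncomputable def trigSym (j : ℕ) (x : ℝ) : ℝ :=
  if j = 0 then 1
  else if Even j then Real.sqrt 2 * Real.cos ((j / 2 : ℕ) * x)
  else Real.sqrt 2 * Real.sin ((j / 2 : ℕ) * x)

/-- The `L²` norm with respect to a measure `μ`. -/
noncomputable def norm2 (μ : Measure ℝ) (f : ℝ → ℝ) : ℝ :=
  Real.sqrt (∫ x, f x ^ 2 ∂μ)

theorem aux_int_cos (m : ℕ) (hm : m ≠ 0) : ∫ x in (-Real.pi)..Real.pi, Real.cos (m * x) = 0 := by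
  have hm' : (m : ℝ) ≠ 0 := by exact_mod_cast hm
  rw [intervalIntegral.integral_comp_mul_left (fun x => Real.cos x) hm', integral_cos]
  have : (m : ℝ) * -Real.pi = -(m * Real.pi) := by ring
  rw [this, Real.sin_neg, Real.sin_nat_mul_pi]; simp

theorem aux_int_cos_cos (i m : ℕ) (h : i < m) :
    ∫ x in (-Real.pi)..Real.pi, Real.cos (i * x) * Real.cos (m * x) = 0 := by
  have e : ∀ x : ℝ, Real.cos (i * x) * Real.cos (m * x)
      = (1/2) * Real.cos ((m - i : ℕ) * x) + (1/2) * Real.cos ((m + i : ℕ) * x) := by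
    intro x
    rw [Nat.cast_sub h.le, Nat.cast_add, sub_mul, add_mul, Real.cos_sub, Real.cos_add]; ring
  simp_rw [e]
  rw [intervalIntegral.integral_add, intervalIntegral.integral_const_mul,
    intervalIntegral.integral_const_mul, aux_int_cos _ (by omega), aux_int_cos _ (by omega)]
  · simp
  all_goals exact Continuous.intervalIntegrable (by fun_prop) _ _

theorem aux_int_cos_sq (m : ℕ) (h : 0 < m) :
    ∫ x in (-Real.pi)..Real.pi, Real.cos (m * x) ^ 2 = Real.pi := by
  have e : ∀ x : ℝ, Real.cos (m * x) ^ 2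
      = (1/2) + (1/2) * Real.cos ((2 * m : ℕ) * x) := by
    intro x
    rw [Real.cos_sq]; push_cast; ring_nf
  simp_rw [e]
  rw [intervalIntegral.integral_add, intervalIntegral.integral_const_mul,
    aux_int_cos _ (by omega)]
  · simp; ring
  all_goals exact Continuous.intervalIntegrable (by fun_prop) _ _

theorem aux_orth (c : ℝ) (a : ℕ → ℝ) (N m : ℕ) (h : N < m) :
    ∫ x in (-Real.pi)..Real.pi,
      (c + ∑ k ∈ Finset.range N, a k * Real.cos ((k + 1 : ℕ) * x)) * Real.cos (m * x) = 0 := by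
  induction N with
  | zero =>
    simp only [Finset.range_zero, Finset.sum_empty, add_zero]
    rw [intervalIntegral.integral_const_mul, aux_int_cos _ (by omega), mul_zero]
  | succ N ih =>
    have e : ∀ x : ℝ, (c + ∑ k ∈ Finset.range (N+1), a k * Real.cos ((k + 1 : ℕ) * x))
        * Real.cos (m * x) = (c + ∑ k ∈ Finset.range N, a k * Real.cos ((k + 1 : ℕ) * x))
        * Real.cos (m * x) + a N * (Real.cos ((N + 1 : ℕ) * x) * Real.cos (m * x)) := by
      intro x; rw [Finset.sum_range_succ]; ring
    simp_rw [e]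
    rw [intervalIntegral.integral_add, ih (by omega), intervalIntegral.integral_const_mul,
      aux_int_cos_cos _ _ h]
    · simp
    all_goals exact Continuous.intervalIntegrable (by fun_prop) _ _

theorem aux_parseval (c : ℝ) (a : ℕ → ℝ) (N : ℕ) :
    ∫ x in (-Real.pi)..Real.pi,
      (c + ∑ k ∈ Finset.range N, a k * Real.cos ((k + 1 : ℕ) * x)) ^ 2
      = Real.pi * (2 * c ^ 2 + ∑ k ∈ Finset.range N, a k ^ 2) := by
  induction N with
  | zero => simp; ring
  | succ N ih =>
    have e : ∀ x : ℝ, (c + ∑ k ∈ Finset.range (N+1), a k * Real.cos ((k + 1 : ℕ) * x)) ^ 2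
        = ((c + ∑ k ∈ Finset.range N, a k * Real.cos ((k + 1 : ℕ) * x)) ^ 2
        + (2 * a N) * ((c + ∑ k ∈ Finset.range N, a k * Real.cos ((k + 1 : ℕ) * x))
          * Real.cos ((N + 1 : ℕ) * x))) + a N ^ 2 * Real.cos ((N + 1 : ℕ) * x) ^ 2 := by
      intro x; rw [Finset.sum_range_succ]; ring
    simp_rw [e]
    rw [intervalIntegral.integral_add, intervalIntegral.integral_add, ih,
      intervalIntegral.integral_const_mul, intervalIntegral.integral_const_mul,
      aux_orth _ _ _ _ (by omega), aux_int_cos_sq _ (by omega), Finset.sum_range_succ]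
    · ring
    all_goals exact Continuous.intervalIntegrable (by fun_prop) _ _

noncomputable def auxFejer (l : ℕ) (x : ℝ) : ℝ :=
  ((l : ℝ) + 1) + ∑ k ∈ Finset.range l, (2 * ((l : ℝ) - k)) * Real.cos ((k + 1 : ℕ) * x)

theorem aux_dirichlet (l : ℕ) (x : ℝ) :
    (1 + 2 * ∑ k ∈ Finset.range l, Real.cos ((k + 1 : ℕ) * x)) * (1 - Real.cos x)
      = Real.cos (l * x) - Real.cos ((l + 1 : ℕ) * x) := by
  induction l with
  | zero => simp
  | succ l ih =>
    rw [Finset.sum_range_succ, mul_add, ← add_assoc, add_mul, ih]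
    have h1 : ((l + 1 + 1 : ℕ) : ℝ) * x = (l + 1 : ℕ) * x + x := by push_cast; ring
    have h2 : (l : ℝ) * x = (l + 1 : ℕ) * x - x := by push_cast; ring
    rw [h1, h2, Real.cos_add, Real.cos_sub]; ring

theorem aux_fejer (l : ℕ) (x : ℝ) :
    auxFejer l x * (1 - Real.cos x) = 1 - Real.cos ((l + 1 : ℕ) * x) := by
  induction l with
  | zero => simp [auxFejer]
  | succ l ih =>
    have e : auxFejer (l + 1) x = auxFejer l x
        + (1 + 2 * ∑ k ∈ Finset.range (l + 1), Real.cos ((k + 1 : ℕ) * x)) := by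
      unfold auxFejer
      rw [Finset.sum_range_succ, Finset.sum_range_succ, mul_add, Finset.mul_sum]
      have : ∑ k ∈ Finset.range l, 2 * (((l + 1 : ℕ) : ℝ) - k) * Real.cos ((k + 1 : ℕ) * x)
        = ∑ k ∈ Finset.range l, 2 * ((l : ℝ) - k) * Real.cos ((k + 1 : ℕ) * x)
          + ∑ k ∈ Finset.range l, 2 * Real.cos ((k + 1 : ℕ) * x) := by
        rw [← Finset.sum_add_distrib]
        refine Finset.sum_congr rfl fun k _ => ?_
        push_cast; ring
      rw [this]; push_cast; ring
    rw [e, add_mul, ih, aux_dirichlet]; ring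

theorem aux_sum (l : ℕ) :
    ∑ k ∈ Finset.range l, (2 * ((l : ℝ) - k)) ^ 2 = 2 * (l : ℝ) * (l + 1) * (2 * l + 1) / 3 := by
  induction l with
  | zero => simp
  | succ l ih =>
    rw [Finset.sum_range_succ']
    have : ∀ k : ℕ, (2 * (((l + 1 : ℕ) : ℝ) - ((k + 1 : ℕ) : ℝ))) ^ 2 = (2 * ((l : ℝ) - k)) ^ 2 := by
      intro k; push_cast; ring
    simp_rw [this]
    rw [ih]; push_cast; ring

theorem aux_norm (l : ℕ) : norm2 unifSym (auxFejer l) ^ 2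
    = (l + 1) * (2 * (l + 1) ^ 2 + 1) / 3 := by
  have hpi := Real.pi_pos
  unfold norm2 unifSym
  rw [Real.sq_sqrt (integral_nonneg fun x => sq_nonneg _), integral_smul_measure,
    integral_Icc_eq_integral_Ioc, ← intervalIntegral.integral_of_le (by linarith)]
  unfold auxFejer
  rw [aux_parseval, aux_sum, ENNReal.toReal_inv, ENNReal.toReal_ofReal (by positivity),
    smul_eq_mul]
  field_simp
  ring

theorem aux_mem (l : ℕ) :
    auxFejer l ∈ Submodule.span ℝ {f : ℝ → ℝ | ∃ j ≤ 2 * l, f = trigSym j} := by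
  have e : auxFejer l = ((l : ℝ) + 1) • trigSym 0
      + ∑ k ∈ Finset.range l, (2 * ((l : ℝ) - k) / Real.sqrt 2) • trigSym (2 * (k + 1)) := by
    funext x
    simp only [auxFejer, Pi.add_apply, Pi.smul_apply, Finset.sum_apply, smul_eq_mul]
    congr 1
    · simp [trigSym]
    · refine Finset.sum_congr rfl fun k _ => ?_
      have h2 : Real.sqrt 2 ≠ 0 := by positivity
      have h3 : 2 * (k + 1) / 2 = k + 1 := by omega
      simp only [trigSym, h3, even_two_mul, if_true]
      rw [if_neg (by omega)]
      field_simp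
  rw [e]
  refine Submodule.add_mem _ (Submodule.smul_mem _ _ (Submodule.subset_span ⟨0, by omega, rfl⟩))
    (Submodule.sum_mem _ fun k hk => Submodule.smul_mem _ _ (Submodule.subset_span ⟨_, ?_, rfl⟩))
  have := Finset.mem_range.1 hk
  omega

theorem aux_bound (l : ℕ) (x : ℝ) (hx : |x| ≤ Real.pi) :
    |auxFejer l x| * x ^ 2 ≤ Real.pi ^ 2 := by
  have hpi := Real.pi_pos
  have h1 := Real.cos_le_one_sub_mul_cos_sq hx
  have h2 : |auxFejer l x| * (1 - Real.cos x) ≤ 2 := by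
    rw [← abs_of_nonneg (sub_nonneg.2 (Real.cos_le_one x)), ← abs_mul, aux_fejer, abs_le]
    constructor <;> linarith [Real.cos_le_one ((l + 1 : ℕ) * x), Real.neg_one_le_cos ((l + 1 : ℕ) * x)]
  have h3 : |auxFejer l x| * (2 / Real.pi ^ 2 * x ^ 2) ≤ 2 :=
    le_trans (mul_le_mul_of_nonneg_left (by linarith) (abs_nonneg _)) h2
  have h4 : |auxFejer l x| * x ^ 2
      = |auxFejer l x| * (2 / Real.pi ^ 2 * x ^ 2) * (Real.pi ^ 2 / 2) := by field_simp
  rw [h4]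
  nlinarith [sq_nonneg Real.pi]

theorem aux_meas (l : ℕ) (t : ℝ) (ht : 0 < t) :
    (unifSym {x | t ≤ |auxFejer l x|}).toReal ≤ 1 / Real.sqrt t := by
  have hpi := Real.pi_pos
  have hs : 0 < Real.sqrt t := Real.sqrt_pos.2 ht
  have hc : Continuous (auxFejer l) := by unfold auxFejer; fun_prop
  have hm : MeasurableSet {x | t ≤ |auxFejer l x|} :=
    measurableSet_le measurable_const hc.abs.measurable
  have hsub : {x | t ≤ |auxFejer l x|} ∩ Set.Icc (-Real.pi) Real.pi
      ⊆ Set.Icc (-(Real.pi / Real.sqrt t)) (Real.pi / Real.sqrt t) := by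
    rintro x ⟨h1, h2⟩
    have hb := aux_bound l x (abs_le.2 h2)
    have h1 : t ≤ |auxFejer l x| := h1
    rw [Set.mem_Icc, ← abs_le, le_div_iff₀ hs]
    refine (pow_le_pow_iff_left₀ (by positivity) hpi.le two_ne_zero).1 ?_
    rw [mul_pow, sq_abs, Real.sq_sqrt ht.le]
    nlinarith [mul_le_mul_of_nonneg_right h1 (sq_nonneg x)]
  have hv : volume ({x | t ≤ |auxFejer l x|} ∩ Set.Icc (-Real.pi) Real.pi)
      ≤ ENNReal.ofReal (2 * (Real.pi / Real.sqrt t)) := by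
    refine (measure_mono hsub).trans ?_
    rw [Real.volume_Icc]; apply le_of_eq; congr 1; ring
  unfold unifSym
  rw [Measure.smul_apply, Measure.restrict_apply hm, smul_eq_mul, ENNReal.toReal_mul,
    ENNReal.toReal_inv, ENNReal.toReal_ofReal (by positivity)]
  have := ENNReal.toReal_le_of_le_ofReal (by positivity) hv
  calc _ ≤ (2 * Real.pi)⁻¹ * (2 * (Real.pi / Real.sqrt t)) := by gcongr
    _ = _ := by field_simp

/-- Let `X` be uniform on `[-π, π]` and let
`m_D = span{φ_j : j = 0, …, 2l}` be the trigonometric polynomials of degree at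
most `l`, of dimension `D = 2l + 1`. If `m_D` satisfies the small-ball condition
with constants `(β₀, κ₀)`, then `β₀ ≤ 3^{1/4} √2 κ₀^{-1/2} D^{-3/4}`. -/
theorem fourier_small_ball_upper_bound (l : ℕ) (κ₀ β₀ : ℝ) (hκ₀ : 0 < κ₀) (hβ₀ : 0 < β₀)
    (hSB : ∀ s ∈ Submodule.span ℝ {f : ℝ → ℝ | ∃ j ≤ 2 * l, f = trigSym j},
      β₀ ≤ (unifSym {x | κ₀ * norm2 unifSym s ≤ |s x|}).toReal) :
    β₀ ≤ (3 : ℝ) ^ ((1 : ℝ) / 4) * Real.sqrt 2 * κ₀ ^ (-(1 : ℝ) / 2) *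
      ((2 * l + 1 : ℕ) : ℝ) ^ (-(3 : ℝ) / 4) := by
  have hN := aux_norm l
  have hM := hSB _ (aux_mem l)
  set N := norm2 unifSym (auxFejer l) with hNdef
  have hN0 : 0 ≤ N := Real.sqrt_nonneg _
  have hNpos : 0 < N := by
    rcases hN0.lt_or_eq with h | h
    · exact h
    · rw [← h] at hN
      have : (0 : ℝ) < (l + 1) * (2 * (l + 1) ^ 2 + 1) / 3 := by positivity
      linarith
  have hβ := hM.trans (aux_meas l (κ₀ * N) (by positivity))
  have hD : (0 : ℝ) < ((2 * l + 1 : ℕ) : ℝ) := by positivity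
  set D : ℝ := ((2 * l + 1 : ℕ) : ℝ) with hDdef
  have hDN : D ^ 3 ≤ 12 * N ^ 2 := by
    rw [hN, hDdef]; push_cast
    have : (0 : ℝ) ≤ l := Nat.cast_nonneg l
    nlinarith [sq_nonneg (l : ℝ)]
  refine (pow_le_pow_iff_left₀ hβ₀.le (by positivity) (n := 4) (by norm_num)).1 ?_
  have e1 : ((3 : ℝ) ^ ((1 : ℝ) / 4)) ^ 4 = 3 := by
    rw [← Real.rpow_natCast, ← Real.rpow_mul (by norm_num)]; norm_num
  have e2 : (Real.sqrt 2) ^ 4 = 4 := by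
    rw [show 4 = 2 * 2 by rfl, pow_mul, Real.sq_sqrt (by norm_num)]; norm_num
  have e3 : (κ₀ ^ (-(1 : ℝ) / 2)) ^ 4 = (κ₀ ^ 2)⁻¹ := by
    rw [← Real.rpow_natCast, ← Real.rpow_mul hκ₀.le, ← Real.rpow_natCast κ₀ 2,
      ← Real.rpow_neg hκ₀.le]; norm_num
  have e4 : (D ^ (-(3 : ℝ) / 4)) ^ 4 = (D ^ 3)⁻¹ := by
    rw [← Real.rpow_natCast, ← Real.rpow_mul hD.le, ← Real.rpow_natCast D 3,
      ← Real.rpow_neg hD.le]; norm_num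
  rw [mul_pow, mul_pow, mul_pow, e1, e2, e3, e4]
  have hs : Real.sqrt (κ₀ * N) ^ 4 = κ₀ ^ 2 * N ^ 2 := by
    rw [show 4 = 2 * 2 by rfl, pow_mul, Real.sq_sqrt (by positivity)]; ring
  calc β₀ ^ 4 ≤ (1 / Real.sqrt (κ₀ * N)) ^ 4 := by gcongr
    _ = 1 / (κ₀ ^ 2 * N ^ 2) := by rw [div_pow, hs, one_pow]
    _ ≤ 12 / (κ₀ ^ 2 * D ^ 3) := by
      rw [div_le_div_iff₀ (by positivity) (by positivity)]
      nlinarith [mul_le_mul_of_nonneg_left hDN (sq_nonneg κ₀)]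
    _ = _ := by field_simp; norm_num
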